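/- Let n ≥ 1, let q₁, q₂ ∈ [1,∞] with 1 = 1/q₁ + 1/q₂, let α₁, α₂ ≥ 0, and set α = α₁/q₁ + α₂/q₂. Then for all locally integrable f₁, f₂ on ℝ^n and all ρ > 0, |||f₁ f₂|||_{1,α;ρ} ≤ |||f₁|||_{q₁,α₁;ρ} · |||f₂|||_{q₂,α₂;ρ}. -/

import Mathlib

open MeasureTheory Real Set ENNReal

noncomputable def logFac (s : ℝ) : ℝ := Real.log (Real.exp 1 + 1 / s)

/-- The weak Zygmund type norm `‖f‖_{𝔏^{q,∞}(log 𝔏)^α}` for an exponent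
`q ∈ [1,∞]`; for `q = ∞` it is the `L^∞` norm. -/
noncomputable def zygNormE (n : ℕ) (q : ℝ≥0∞) (α : ℝ)
    (f : EuclideanSpace ℝ (Fin n) → ℝ) : ℝ≥0∞ :=
  if q = ⊤ then eLpNorm f ⊤ volume
  else
    ⨆ s : Set.Ioi (0 : ℝ),
      (ENNReal.ofReal (logFac s.1) ^ α *
        ⨆ E : {E : Set (EuclideanSpace ℝ (Fin n)) //
            MeasurableSet E ∧ volume E = ENNReal.ofReal s.1},
          ∫⁻ x in E.1, ENNReal.ofReal (|f x| ^ q.toReal)) ^ (1 / q.toReal)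

/-- The uniformly local weak Zygmund type norm `|||f|||_{q,α;ρ}`. -/
noncomputable def zygNormULE (n : ℕ) (q : ℝ≥0∞) (α ρ : ℝ)
    (f : EuclideanSpace ℝ (Fin n) → ℝ) : ℝ≥0∞ :=
  ⨆ z : EuclideanSpace ℝ (Fin n),
    zygNormE n q α ((Metric.ball z ρ).indicator f)

/-!
Pulling the power `1 / q` inside both suprema turns the weak Zygmund type norm into
`sup_{0 < |E| < ∞} [log (e + 1 / |E|)] ^ (α / q) * ‖f‖_{L^q(E)}`, a formula that persists for
`q = ∞` because countably many sets of finite measure cover the space. For each fixed `E` the claim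
is Hölder's inequality on `E`, since the logarithmic weights of the two factors multiply to that of
the product.
-/

section LpSeminorm

variable {X ε : Type*} [MeasurableSpace X] {μ : Measure X} {C : ℝ≥0∞}

lemma eLpNorm_top_le_iff_forall_restrict [TopologicalSpace ε] [ContinuousENorm ε] [SigmaFinite μ]
    {f : X → ε} :
    eLpNorm f ⊤ μ ≤ C ↔
      ∀ E, MeasurableSet E → μ E ≠ ⊤ → eLpNorm f ⊤ (μ.restrict E) ≤ C := by
  refine ⟨fun h E _ _ ↦ (eLpNorm_restrict_le f ⊤ μ E).trans h, fun h ↦ ?_⟩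
  have h_span : ∀ k, ∀ᵐ x ∂μ.restrict (spanningSets μ k), ‖f x‖ₑ ≤ C := fun k ↦ by
    have hk := h _ (measurableSet_spanningSets μ k) (measure_spanningSets_lt_top μ k).ne
    rw [eLpNorm_exponent_top] at hk
    exact ae_le_eLpNormEssSup.mono fun x hx ↦ hx.trans hk
  rw [eLpNorm_exponent_top]
  refine eLpNormEssSup_le_of_ae_enorm_bound ?_
  rwa [← ae_restrict_iUnion_iff, iUnion_spanningSets, Measure.restrict_univ] at h_span

lemma rpow_mul_lintegral_rpow_abs_rpow_eq_mul_eLpNorm {q : ℝ≥0∞} (hq₀ : q ≠ 0) (hq : q ≠ ⊤)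
    (w : ℝ≥0∞) (α : ℝ) (f : X → ℝ) :
    (w ^ α * ∫⁻ x, ENNReal.ofReal (|f x| ^ q.toReal) ∂μ) ^ (1 / q.toReal) =
      w ^ (α * q⁻¹.toReal) * eLpNorm f q μ := by
  simp only [eLpNorm_eq_lintegral_rpow_enorm_toReal hq₀ hq, Real.enorm_eq_ofReal_abs,
    ENNReal.ofReal_rpow_of_nonneg (abs_nonneg _) toReal_nonneg, toReal_inv]
  rw [ENNReal.mul_rpow_of_nonneg _ _ (by positivity), ← ENNReal.rpow_mul, one_div]

end LpSeminorm

lemma logFac_pos {s : ℝ} (hs : 0 < s) : 0 < logFac s :=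
  Real.log_pos <| lt_add_of_lt_of_pos (Real.one_lt_exp_iff.2 one_pos) (one_div_pos.2 hs)

section Zygmund

variable {n : ℕ} {q q₁ q₂ r : ℝ≥0∞} {α α₁ α₂ : ℝ} {f g : EuclideanSpace ℝ (Fin n) → ℝ}
  {C : ℝ≥0∞}

lemma zygNormE_top_le_iff :
    zygNormE n ⊤ α f ≤ C ↔ ∀ s, 0 < s → ∀ E, MeasurableSet E → volume E = ENNReal.ofReal s →
      eLpNorm f ⊤ (volume.restrict E) ≤ C := by
  rw [zygNormE, if_pos rfl, eLpNorm_top_le_iff_forall_restrict]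
  refine ⟨fun h s _ E hE hEs ↦ h E hE (hEs ▸ ofReal_ne_top), fun h E hE hE_top ↦ ?_⟩
  obtain hE_zero | hE_zero := eq_or_ne (volume E) 0
  · simp [Measure.restrict_eq_zero.2 hE_zero]
  · exact h _ (ENNReal.toReal_pos hE_zero hE_top) E hE (ofReal_toReal hE_top).symm

lemma zygNormE_le_iff (hq₀ : q ≠ 0) :
    zygNormE n q α f ≤ C ↔ ∀ s, 0 < s → ∀ E, MeasurableSet E → volume E = ENNReal.ofReal s →
      ENNReal.ofReal (logFac s) ^ (α * q⁻¹.toReal) * eLpNorm f q (volume.restrict E) ≤ C := by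
  obtain rfl | hq := eq_or_ne q ⊤
  · simpa using zygNormE_top_le_iff
  have hq_pos := ENNReal.toReal_pos hq₀ hq
  simp only [zygNormE, if_neg hq, ← rpow_mul_lintegral_rpow_abs_rpow_eq_mul_eLpNorm hq₀ hq, one_div,
    ENNReal.rpow_inv_le_iff hq_pos, ENNReal.mul_iSup, iSup_le_iff, Subtype.forall, and_imp,
    mem_Ioi]

theorem zygNormE_mul_le [HolderTriple q₁ q₂ r] (hr : r ≠ 0)
    (hα : α * r⁻¹.toReal = α₁ * q₁⁻¹.toReal + α₂ * q₂⁻¹.toReal)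
    (hf : AEStronglyMeasurable f) (hg : AEStronglyMeasurable g) :
    zygNormE n r α (f * g) ≤ zygNormE n q₁ α₁ f * zygNormE n q₂ α₂ g := by
  have hq₁ : q₁ ≠ 0 := ne_bot_of_le_ne_bot hr (HolderTriple.le q₁ q₂ r)
  have hq₂ : q₂ ≠ 0 := ne_bot_of_le_ne_bot hr (HolderTriple.le q₂ q₁ r)
  refine (zygNormE_le_iff hr).2 fun s hs E hE hEs ↦ ?_
  set w := ENNReal.ofReal (logFac s)
  have hw₀ : w ≠ 0 := (ofReal_pos.2 (logFac_pos hs)).ne'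
  have holder : eLpNorm (f * g) r (volume.restrict E) ≤
      eLpNorm f q₁ (volume.restrict E) * eLpNorm g q₂ (volume.restrict E) := by
    simpa only [smul_eq_mul] using eLpNorm_smul_le_mul_eLpNorm hg.restrict hf.restrict
  calc w ^ (α * r⁻¹.toReal) * eLpNorm (f * g) r (volume.restrict E)
    _ ≤ w ^ (α * r⁻¹.toReal) *
        (eLpNorm f q₁ (volume.restrict E) * eLpNorm g q₂ (volume.restrict E)) := by gcongr
    _ = w ^ (α₁ * q₁⁻¹.toReal) * eLpNorm f q₁ (volume.restrict E) *
        (w ^ (α₂ * q₂⁻¹.toReal) * eLpNorm g q₂ (volume.restrict E)) := by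
      rw [hα, ENNReal.rpow_add _ _ hw₀ ofReal_ne_top, mul_mul_mul_comm]
    _ ≤ zygNormE n q₁ α₁ f * zygNormE n q₂ α₂ g :=
      mul_le_mul' ((zygNormE_le_iff hq₁).1 le_rfl s hs E hE hEs)
        ((zygNormE_le_iff hq₂).1 le_rfl s hs E hE hEs)

lemma zygNormE_indicator_ball_le_zygNormULE (z : EuclideanSpace ℝ (Fin n)) (ρ : ℝ) :
    zygNormE n q α ((Metric.ball z ρ).indicator f) ≤ zygNormULE n q α ρ f :=
  le_iSup (fun z ↦ zygNormE n q α ((Metric.ball z ρ).indicator f)) z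

end Zygmund

theorem stmt8_general (n : ℕ) (q₁ q₂ r : ℝ≥0∞) [HolderTriple q₁ q₂ r] (hr : r ≠ 0)
    (α₁ α₂ α : ℝ) (hα : α * r⁻¹.toReal = α₁ * q₁⁻¹.toReal + α₂ * q₂⁻¹.toReal)
    (f₁ f₂ : EuclideanSpace ℝ (Fin n) → ℝ)
    (h₁ : AEStronglyMeasurable f₁) (h₂ : AEStronglyMeasurable f₂) (ρ : ℝ) :
    zygNormULE n r α ρ (fun x ↦ f₁ x * f₂ x) ≤
      zygNormULE n q₁ α₁ ρ f₁ * zygNormULE n q₂ α₂ ρ f₂ := by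
  refine iSup_le fun z ↦ ?_
  rw [indicator_mul]
  calc zygNormE n r α ((Metric.ball z ρ).indicator f₁ * (Metric.ball z ρ).indicator f₂)
    _ ≤ zygNormE n q₁ α₁ ((Metric.ball z ρ).indicator f₁) *
        zygNormE n q₂ α₂ ((Metric.ball z ρ).indicator f₂) :=
      zygNormE_mul_le hr hα (h₁.indicator measurableSet_ball) (h₂.indicator measurableSet_ball)
    _ ≤ zygNormULE n q₁ α₁ ρ f₁ * zygNormULE n q₂ α₂ ρ f₂ :=
      mul_le_mul' (zygNormE_indicator_ball_le_zygNormULE z ρ)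
        (zygNormE_indicator_ball_le_zygNormULE z ρ)

theorem stmt8 (n : ℕ) (hn : 1 ≤ n) (q₁ q₂ : ℝ≥0∞) (hq₁ : 1 ≤ q₁) (hq₂ : 1 ≤ q₂)
    (hq : q₁⁻¹ + q₂⁻¹ = 1) (α₁ α₂ : ℝ) (hα₁ : 0 ≤ α₁) (hα₂ : 0 ≤ α₂)
    (α : ℝ) (hα : α = α₁ * q₁⁻¹.toReal + α₂ * q₂⁻¹.toReal)
    (f₁ f₂ : EuclideanSpace ℝ (Fin n) → ℝ)
    (h₁ : LocallyIntegrable f₁ volume) (h₂ : LocallyIntegrable f₂ volume)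
    (ρ : ℝ) (hρ : 0 < ρ) :
    zygNormULE n 1 α ρ (fun x => f₁ x * f₂ x) ≤
      zygNormULE n q₁ α₁ ρ f₁ * zygNormULE n q₂ α₂ ρ f₂ := by
  have : HolderConjugate q₁ q₂ := holderConjugate_iff.2 hq
  exact stmt8_general n q₁ q₂ 1 one_ne_zero α₁ α₂ α (by simpa using hα) f₁ f₂
    h₁.aestronglyMeasurable h₂.aestronglyMeasurable ρ
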